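/- There exists L* > 1 such that: (i) for all L ≥ L* and all T ∈ 𝓜, if ψ ∈ 𝒟_L then ℒ_T ψ ∈ 𝒟_L; and (ii) for every L > L* there exists N(L) ∈ ℕ such that for every sequence (T_i)_{i≥1} ⊂ 𝓜 with transfer operators ℒ_i, every ψ ∈ 𝒟_L, and every k ≥ N(L), one has ℒ_k ⋯ ℒ_1 ψ ∈ 𝒟_{L*}. -/

import Mathlib

open MeasureTheory Filter Topology Set UniformConvergence

noncomputable section

instance : Fact ((0:ℝ) < 1) := ⟨zero_lt_one⟩

/-- The circle `𝕊 = ℝ/ℤ`. -/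
abbrev Circle1 : Type := AddCircle (1 : ℝ)

/-- A `C²` expanding circle map with expansion `≥ lam` and `‖T''‖_∞ ≤ Astar`,
encoded by a lift `F : ℝ → ℝ` satisfying `F (x+1) = F x + deg`. -/
structure CM (lam Astar : ℝ) where
  F : ℝ → ℝ
  deg : ℤ
  lift_add_one : ∀ x : ℝ, F (x + 1) = F x + deg
  contDiff : ContDiff ℝ 2 F
  expanding : ∀ x : ℝ, lam ≤ deriv F x
  second_bound : ∀ x : ℝ, |deriv (deriv F) x| ≤ Astar

namespace CM

variable {lam Astar : ℝ}

/-- The induced map on the circle. -/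
def toMap (T : CM lam Astar) : Circle1 → Circle1 :=
  fun x => (↑(T.F ((AddCircle.equivIco 1 0 x : ℝ))) : Circle1)

/-- The derivative of `T`, as a function on the circle. -/
def dmap (T : CM lam Astar) : Circle1 → ℝ :=
  fun x => deriv T.F ((AddCircle.equivIco 1 0 x : ℝ))

end CM

/-- The `C¹` distance on the space of maps. -/
def dC1 {lam Astar : ℝ} (T₁ T₂ : CM lam Astar) : ℝ :=
  (⨆ x : Circle1, dist (T₁.toMap x) (T₂.toMap x)) + (⨆ x : Circle1, |T₁.dmap x - T₂.dmap x|)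

/-- The transfer operator `ℒ_T h (x) = ∑_{T y = x} h y / T' y`. -/
def transfer {lam Astar : ℝ} (T : CM lam Astar) (h : Circle1 → ℝ) : Circle1 → ℝ :=
  fun x => ∑' y : {y : Circle1 // T.toMap y = x}, h y / T.dmap y

/-- Iterated transfer operators `ℒ_k ⋯ ℒ_1` of the sequence `T_1, T_2, …` (`Ts i = T_i`). -/
def transferIter {lam Astar : ℝ} (Ts : ℕ → CM lam Astar) : ℕ → (Circle1 → ℝ) → (Circle1 → ℝ)
  | 0, h => h
  | (k+1), h => transfer (Ts (k+1)) (transferIter Ts k h)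

/-- Composition `T_k ∘ ⋯ ∘ T_1` as circle maps. -/
def mapIter {lam Astar : ℝ} (Ts : ℕ → CM lam Astar) : ℕ → Circle1 → Circle1
  | 0 => id
  | (k+1) => (Ts (k+1)).toMap ∘ mapIter Ts k

/-- Composition of the lifts `F_k ∘ ⋯ ∘ F_1`. -/
def liftIter {lam Astar : ℝ} (Ts : ℕ → CM lam Astar) : ℕ → ℝ → ℝ
  | 0 => id
  | (k+1) => (Ts (k+1)).F ∘ liftIter Ts k

/-- A real representative of `z`. -/
def zrep (z : Circle1) : ℝ := (AddCircle.equivIco 1 0 z : ℝ)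

/-- The coordinate on the cut circle `J_z = 𝕊 ∖ {z}`. -/
def arcCoord (z x : Circle1) : ℝ := ((AddCircle.equivIoc 1 (zrep z) x : ℝ))

/-- `|x − y|_z`: the length of the subarc of `J_z` connecting `x` and `y`. -/
def arcDist (z x y : Circle1) : ℝ := |arcCoord z x - arcCoord z y|

/-- `g` is Lipschitz on `J_z = 𝕊 ∖ {z}` with constant `L`. -/
def LipOnArc (z : Circle1) (L : ℝ) (g : Circle1 → ℝ) : Prop :=
  ∀ x y : Circle1, x ≠ z → y ≠ z → |g x - g y| ≤ L * arcDist z x y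

/-- A probability density w.r.t. the Haar–Lebesgue measure `𝔪` on the circle. -/
def IsProbDensity (ψ : Circle1 → ℝ) : Prop :=
  Integrable ψ volume ∧ (∫ x : Circle1, ψ x) = 1 ∧ ∀ x, 0 ≤ ψ x

/-- The class `𝒟_L`: positive probability densities whose logarithm is Lipschitz
with constant `L` on `J_z` for some `z`. -/
def memD (L : ℝ) (ψ : Circle1 → ℝ) : Prop :=
  IsProbDensity ψ ∧ (∀ x, 0 < ψ x) ∧ ∃ z : Circle1, LipOnArc z L (fun x => Real.log (ψ x))

/-- The `L¹(𝔪)` norm. -/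
def l1norm (h : Circle1 → ℝ) : ℝ := ∫ x : Circle1, |h x|

/-- The supremum norm. -/
def supNorm (h : Circle1 → ℝ) : ℝ := ⨆ x : Circle1, |h x|

/-- The Lipschitz constant of `h` (w.r.t. the metric of the circle). -/
def lipConst (h : Circle1 → ℝ) : ℝ :=
  sInf {L : ℝ | 0 ≤ L ∧ ∀ x y : Circle1, |h x - h y| ≤ L * dist x y}

/-- The Lipschitz norm `‖h‖_Lip = Lip(h) + ‖h‖_∞`. -/
def lipNorm (h : Circle1 → ℝ) : ℝ := lipConst h + supNorm h

/-- `ρ` is the density of the SRB measure of `T`: the density of a `T`-invariant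
probability measure equivalent to `𝔪`. -/
def IsSRBDensity {lam Astar : ℝ} (T : CM lam Astar) (ρ : Circle1 → ℝ) : Prop :=
  IsProbDensity ρ ∧ (∀ᵐ x : Circle1, 0 < ρ x) ∧
    Measure.map T.toMap (volume.withDensity (fun x => ENNReal.ofReal (ρ x))) =
      volume.withDensity (fun x => ENNReal.ofReal (ρ x))

section QDS

variable {lam Astar : ℝ}

/-- `x_{n,k} = T_{n,k} ∘ ⋯ ∘ T_{n,1}` for a triangular array. -/
def arrIter (Tarr : ℕ → ℕ → CM lam Astar) (n : ℕ) : ℕ → Circle1 → Circle1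
  | 0 => id
  | (k+1) => (Tarr n (k+1)).toMap ∘ arrIter Tarr n k

/-- `ℒ_{n,k} ⋯ ℒ_{n,1}` for a triangular array. -/
def arrTransfer (Tarr : ℕ → ℕ → CM lam Astar) (n : ℕ) : ℕ → (Circle1 → ℝ) → (Circle1 → ℝ)
  | 0, h => h
  | (k+1), h => transfer (Tarr n (k+1)) (arrTransfer Tarr n k h)

/-- `f_{n,k} = f ∘ T_{n,k} ∘ ⋯ ∘ T_{n,1}` evaluated at `x`. -/
def fnk (Tarr : ℕ → ℕ → CM lam Astar) (f : Circle1 → ℝ) (n k : ℕ) (x : Circle1) : ℝ :=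
  f (arrIter Tarr n k x)

/-- `ζₙ(x,t) = n⁻¹ (∑_{k<⌊nt⌋} f_{n,k}(x) + {nt}·f_{n,⌊nt⌋}(x))`. -/
def zetaP (Tarr : ℕ → ℕ → CM lam Astar) (f : Circle1 → ℝ) (n : ℕ) (x : Circle1) (t : ℝ) : ℝ :=
  (n : ℝ)⁻¹ * ((∑ k ∈ Finset.range ⌊(n : ℝ) * t⌋₊, fnk Tarr f n k x) +
    Int.fract ((n : ℝ) * t) * fnk Tarr f n ⌊(n : ℝ) * t⌋₊ x)

/-- `ξₙ(x,t) = √n ζₙ(x,t) − √n μ(ζₙ(·,t))` for a measure `μ`. -/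
def xiP (Tarr : ℕ → ℕ → CM lam Astar) (f : Circle1 → ℝ) (μ : Measure Circle1) (n : ℕ)
    (x : Circle1) (t : ℝ) : ℝ :=
  Real.sqrt n * zetaP Tarr f n x t - Real.sqrt n * ∫ y, zetaP Tarr f n y t ∂μ

/-- The Hölder continuity (exponent `η`) of the curve `γ` on `[0,1]`, w.r.t. `d_{C¹}`. -/
def HolderCurve (η : ℝ) (γ : ℝ → CM lam Astar) : Prop :=
  ∃ H : ℝ, ∀ s ∈ Icc (0:ℝ) 1, ∀ t ∈ Icc (0:ℝ) 1, dC1 (γ s) (γ t) ≤ H * |s - t| ^ η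

/-- The convergence-rate condition `sup_n n^η sup_t d_{C¹}(T_{n,⌊nt⌋}, γ_t) < ∞`. -/
def ArrayApprox (η : ℝ) (γ : ℝ → CM lam Astar) (Tarr : ℕ → ℕ → CM lam Astar) : Prop :=
  ∃ M : ℝ, ∀ n : ℕ, 1 ≤ n → ∀ t ∈ Icc (0:ℝ) 1,
    (n : ℝ) ^ η * dC1 (Tarr n ⌊(n : ℝ) * t⌋₊) (γ t) ≤ M

end QDS

/-- The path space: functions `[0,1] → ℝ` with the topology of uniform convergence;
continuous paths (with the supremum metric) embed isometrically. -/
abbrev PathSpace : Type := (Icc (0:ℝ) 1) →ᵤ ℝ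

instance : MeasurableSpace PathSpace := borel PathSpace

/-- A function `[0,1] → ℝ` (given as a function on `ℝ`) as a point of the path space. -/
def pathOf (g : ℝ → ℝ) : PathSpace := UniformFun.ofFun (fun t => g t)

/-- Evaluation of a path at time `t` (clamped to `[0,1]`). -/
def evalPath (t : ℝ) (ω : PathSpace) : ℝ := UniformFun.toFun ω (projIcc 0 1 zero_le_one t)


section Extra

variable {lam Astar : ℝ}

/-- `μ(ζₙ(·,t))` for the measure with density `ρ` w.r.t. `𝔪`. -/
def zetaMean (Tarr : ℕ → ℕ → CM lam Astar) (f : Circle1 → ℝ) (ρ : Circle1 → ℝ)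
    (n : ℕ) (t : ℝ) : ℝ :=
  ∫ y : Circle1, zetaP Tarr f n y t * ρ y

/-- `𝔪(ζₙ(·,t))`, the mean w.r.t. the Lebesgue measure. -/
def zetaMeanM (Tarr : ℕ → ℕ → CM lam Astar) (f : Circle1 → ℝ) (n : ℕ) (t : ℝ) : ℝ :=
  ∫ y : Circle1, zetaP Tarr f n y t

/-- `ξₙ(x,t) = √n ζₙ(x,t) − √n μ(ζₙ(·,t))`, where `μ` has density `ρ`. -/
def xiD (Tarr : ℕ → ℕ → CM lam Astar) (f : Circle1 → ℝ) (ρ : Circle1 → ℝ)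
    (n : ℕ) (x : Circle1) (t : ℝ) : ℝ :=
  Real.sqrt n * zetaP Tarr f n x t - Real.sqrt n * zetaMean Tarr f ρ n t

end Extra

/-- The σ-algebra `𝔉_t` on the path space, generated by the evaluations at times `s ∈ [0,t]`. -/
def pathFiltration (t : ℝ) : MeasurableSpace PathSpace :=
  ⨆ (s : ℝ) (_ : 0 ≤ s ∧ s ≤ t), MeasurableSpace.comap (evalPath s) (borel ℝ)

/-- The process `M_t(ω) = A(ω(t)) − A(ω(0)) − ½∫₀ᵗ σ̂ₛ²·A''(ω(s)) ds`. -/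
def MGproc (σ2 : ℝ → ℝ) (A : ℝ → ℝ) (t : ℝ) (ω : PathSpace) : ℝ :=
  A (evalPath t ω) - A (evalPath 0 ω) -
    (1/2) * ∫ s in (0:ℝ)..t, σ2 s * deriv (deriv A) (evalPath s ω)

/-- `P` solves the martingale problem on `C⁰([0,1],ℝ)` for the generator `½σ̂ₜ² d²/dx²`,
started at `0`:  `P` is a probability measure, concentrated on continuous paths starting at `0`,
and for every `A ∈ C_c^∞(ℝ)` the process `MGproc σ2 A` is a `P`-martingale w.r.t. the
natural filtration `𝔉_t`.  -/
def SolvesMartingaleProblem (σ2 : ℝ → ℝ) (P : Measure PathSpace) : Prop :=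
  IsProbabilityMeasure P ∧
  P {ω : PathSpace | evalPath 0 ω = 0} = 1 ∧
  P {ω : PathSpace | Continuous (UniformFun.toFun ω)} = 1 ∧
  ∀ A : ℝ → ℝ, ContDiff ℝ (⊤ : ℕ∞) A → HasCompactSupport A →
    (∀ t ∈ Icc (0:ℝ) 1, Integrable (MGproc σ2 A t) P) ∧
    (∀ t ∈ Icc (0:ℝ) 1, @Measurable PathSpace ℝ (pathFiltration t) _ (MGproc σ2 A t)) ∧
    (∀ s ∈ Icc (0:ℝ) 1, ∀ t ∈ Icc (0:ℝ) 1, s ≤ t →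
      P[MGproc σ2 A t | pathFiltration s] =ᵐ[P] MGproc σ2 A s)

end

/-!
Lift `T` to the diffeomorphism `F` of `ℝ`.  Its own transfer operator
`s ↦ ψ (F⁻¹ s) / F' (F⁻¹ s)` is a change of variables, and `ℒ_T ψ` is the sum of its `deg T`
translates over a unit interval, so `ℒ_T` preserves integrals.  The inverse `F⁻¹` contracts by
`1 / λ`, and `log F'` is Lipschitz with constant `A* / λ`; hence if `log ψ` is Lipschitz with
constant `L` on `J_z`, the logarithm of each summand is Lipschitz with constant
`L / λ + A* / λ²` on `J_{T z}`, because `F⁻¹` maps every lift of `J_{T z}` into a lift of `J_z`.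
A sum inherits a common bound on the logarithmic increments of its terms, so `ℒ_T` acts on the
constants by an affine contraction of ratio `1 / λ`, and any `L*` above its fixed point
`A* / (λ (λ - 1))` works.
-/

/-! ### Generalities -/

theorem abs_log_sum_sub_log_sum_le {ι : Type*} {s : Finset ι} (hs : s.Nonempty) {u v : ι → ℝ}
    (hu : ∀ i ∈ s, 0 < u i) (hv : ∀ i ∈ s, 0 < v i) {c : ℝ}
    (h : ∀ i ∈ s, |Real.log (u i) - Real.log (v i)| ≤ c) :
    |Real.log (∑ i ∈ s, u i) - Real.log (∑ i ∈ s, v i)| ≤ c := by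
  have log_sum_le : ∀ {u v : ι → ℝ}, (∀ i ∈ s, 0 < u i) → (∀ i ∈ s, 0 < v i) →
      (∀ i ∈ s, |Real.log (u i) - Real.log (v i)| ≤ c) →
      Real.log (∑ i ∈ s, u i) ≤ c + Real.log (∑ i ∈ s, v i) := by
    intro u v hu hv h
    rw [Real.log_le_iff_le_exp (Finset.sum_pos hu hs), Real.exp_add,
      Real.exp_log (Finset.sum_pos hv hs), Finset.mul_sum]
    refine Finset.sum_le_sum fun i hi => ?_
    calc u i ≤ Real.exp (c + Real.log (v i)) := by
          rw [← Real.log_le_iff_le_exp (hu i hi)]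
          linarith [le_of_abs_le (h i hi)]
      _ = Real.exp c * v i := by rw [Real.exp_add, Real.exp_log (hv i hi)]
  rw [abs_sub_le_iff]
  constructor
  · linarith [log_sum_le hu hv h]
  · linarith [log_sum_le hv hu fun i hi => abs_sub_comm (Real.log (u i)) _ ▸ h i hi]

section UnitTranslates

variable {E : Type*} [NormedAddCommGroup E] {f : ℝ → E} {a : ℝ} {n : ℕ}

theorem intervalIntegrable_comp_add_natCast (hf : IntervalIntegrable f volume a (a + n)) {j : ℕ}
    (hj : j < n) : IntervalIntegrable (fun t => f (t + j)) volume a (a + 1) := by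
  have hj' : (j : ℝ) + 1 ≤ n := by exact_mod_cast hj
  have hsub : IntervalIntegrable f volume (a + j) (a + 1 + j) := by
    refine hf.mono_set ?_
    rw [uIcc_of_le (by linarith), uIcc_of_le (by linarith)]
    exact Icc_subset_Icc (by linarith [j.cast_nonneg (α := ℝ)]) (by linarith)
  simpa only [add_sub_cancel_right] using hsub.comp_add_right (j : ℝ)

theorem intervalIntegrable_sum_comp_add_natCast (hf : IntervalIntegrable f volume a (a + n)) :
    IntervalIntegrable (fun t => ∑ j ∈ Finset.range n, f (t + j)) volume a (a + 1) := by
  simpa only [Finset.sum_fn] using IntervalIntegrable.sum (Finset.range n)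
    fun j hj => intervalIntegrable_comp_add_natCast hf (Finset.mem_range.1 hj)

theorem integral_sum_comp_add_natCast [NormedSpace ℝ E]
    (hf : IntervalIntegrable f volume a (a + n)) :
    ∫ t in a..a + 1, ∑ j ∈ Finset.range n, f (t + j) = ∫ t in a..a + n, f t := by
  have hadj : ∀ j : ℕ, a + 1 + j = a + (j + 1 : ℕ) := fun j => by push_cast; ring
  have hpiece : ∀ j < n, IntervalIntegrable f volume (a + j) (a + (j + 1 : ℕ)) := by
    intro j hj
    simpa only [sub_neg_eq_add, sub_add_cancel, neg_add_cancel_right, add_neg_cancel_right, hadj]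
      using (intervalIntegrable_comp_add_natCast hf hj).comp_add_right (-(j : ℝ))
  calc ∫ t in a..a + 1, ∑ j ∈ Finset.range n, f (t + j)
      = ∑ j ∈ Finset.range n, ∫ t in a..a + 1, f (t + j) :=
        intervalIntegral.integral_finsetSum fun j hj =>
          intervalIntegrable_comp_add_natCast hf (Finset.mem_range.1 hj)
    _ = ∑ j ∈ Finset.range n, ∫ t in a + j..a + (j + 1 : ℕ), f t := by
        simp only [intervalIntegral.integral_comp_add_right, hadj]
    _ = ∫ t in a..a + n, f t := by
        simpa only [Nat.cast_zero, add_zero] using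
          intervalIntegral.sum_integral_adjacent_intervals (a := fun j : ℕ => a + j) hpiece

end UnitTranslates

theorem integrable_addCircle_iff_intervalIntegrable {E : Type*} [NormedAddCommGroup E] {p : ℝ}
    [Fact (0 < p)] {f : AddCircle p → E} (a : ℝ) :
    Integrable f ↔ IntervalIntegrable (fun t : ℝ => f t) volume a (a + p) := by
  have hp : 0 < p := Fact.out
  have hcoe : (fun s : Ioc a (a + p) => f (s : ℝ)) ∘ AddCircle.equivIoc p a = f := by
    funext x
    simp only [Function.comp_apply, AddCircle.coe_equivIoc]
  rw [intervalIntegrable_iff_integrableOn_Ioc_of_le (by linarith), IntegrableOn,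
    ← map_comap_subtype_coe measurableSet_Ioc,
    (MeasurableEmbedding.subtype_coe measurableSet_Ioc).integrable_map_iff]
  nth_rw 1 [← hcoe]
  exact (AddCircle.measurePreserving_equivIoc p (a := a)).integrable_comp_emb
    (AddCircle.measurableEquivIoc p a).measurableEmbedding

theorem forall_addCircle_ne_coe_iff {p : ℝ} [Fact (0 < p)] {a : ℝ} {P : AddCircle p → Prop} :
    (∀ x, x ≠ (a : AddCircle p) → P x) ↔ ∀ s ∈ Ioo a (a + p), P (s : AddCircle p) := by
  have hp : 0 < p := Fact.out
  constructor
  · intro h s hs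
    refine h s fun hsa => hs.1.ne' ?_
    exact (AddCircle.coe_eq_coe_iff_of_mem_Ico (Ioo_subset_Ico_self hs)
      (left_mem_Ico.2 (by linarith))).1 hsa
  · intro h x hx
    obtain ⟨s, hs, rfl⟩ : x ∈ ((↑) : ℝ → AddCircle p) '' Ico a (a + p) := by
      rw [AddCircle.coe_image_Ico_eq]
      trivial
    exact h s ⟨hs.1.lt_of_ne fun has => hx (by rw [has]), hs.2⟩

/-! ### The circle cut at a point -/

namespace Circle1

theorem coe_eq_coe_iff {x y : ℝ} : (x : Circle1) = y ↔ ∃ n : ℤ, x = y + n := by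
  rw [eq_comm, ← AddCommGroup.modEq_iff_eq_mod_zmultiples, AddCommGroup.modEq_iff_eq_add_zsmul]
  simp only [zsmul_eq_mul, mul_one]

theorem coe_add_intCast (x : ℝ) (n : ℤ) : ((x + n : ℝ) : Circle1) = x :=
  coe_eq_coe_iff.2 ⟨n, rfl⟩

theorem exists_equivIco_coe_eq (x : ℝ) :
    ∃ n : ℤ, (AddCircle.equivIco 1 0 (x : Circle1) : ℝ) = x + n :=
  coe_eq_coe_iff.1 AddCircle.coe_equivIco

end Circle1

theorem arcDist_coe {a s t : ℝ} (hs : s ∈ Ioo a (a + 1)) (ht : t ∈ Ioo a (a + 1)) :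
    arcDist (a : Circle1) s t = |s - t| := by
  obtain ⟨n, hn⟩ : ∃ n : ℤ, zrep a = a + n := Circle1.exists_equivIco_coe_eq a
  have arcCoord_coe : ∀ r ∈ Ioo a (a + 1), arcCoord (a : Circle1) r = r + n := by
    intro r hr
    rw [arcCoord, ← Circle1.coe_add_intCast r n]
    refine AddCircle.equivIoc_coe_of_mem ?_
    rw [hn]
    constructor <;> linarith [hr.1, hr.2]
  rw [arcDist, arcCoord_coe s hs, arcCoord_coe t ht, add_sub_add_right_eq_sub]

theorem lipOnArc_coe_iff {a L : ℝ} {g : Circle1 → ℝ} :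
    LipOnArc a L g ↔ ∀ s ∈ Ioo a (a + 1), ∀ t ∈ Ioo a (a + 1), |g s - g t| ≤ L * |s - t| := by
  calc LipOnArc a L g
      ↔ ∀ x, x ≠ (a : Circle1) → ∀ y, y ≠ (a : Circle1) → |g x - g y| ≤ L * arcDist a x y :=
        forall_congr' fun _ => forall_comm
    _ ↔ ∀ s ∈ Ioo a (a + 1), ∀ t ∈ Ioo a (a + 1), |g s - g t| ≤ L * arcDist a s t := by
        simp only [forall_addCircle_ne_coe_iff]
    _ ↔ _ := forall₂_congr fun s hs => forall₂_congr fun t ht => by rw [arcDist_coe hs ht]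

theorem LipOnArc.nonneg {z : Circle1} {L : ℝ} {g : Circle1 → ℝ} (h : LipOnArc z L g) : 0 ≤ L := by
  obtain ⟨a, rfl⟩ := QuotientAddGroup.mk_surjective z
  have hle := lipOnArc_coe_iff.1 h (a + 1 / 3) ⟨by linarith, by linarith⟩
    (a + 2 / 3) ⟨by linarith, by linarith⟩
  have hlen : |a + 1 / 3 - (a + 2 / 3)| = 1 / 3 := by rw [abs_eq (by norm_num)]; right; ring
  rw [hlen] at hle
  linarith [(abs_nonneg _).trans hle]

theorem memD.mono {L L' : ℝ} (hLL' : L ≤ L') {ψ : Circle1 → ℝ} (hψ : memD L ψ) : memD L' ψ := by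
  obtain ⟨hdensity, hpos, z, hz⟩ := hψ
  exact ⟨hdensity, hpos, z, fun x y hx hy => (hz x y hx hy).trans
    (mul_le_mul_of_nonneg_right hLL' (abs_nonneg _))⟩

/-! ### Lifts of expanding maps -/

namespace CM

variable {lam Astar : ℝ}

theorem differentiable (T : CM lam Astar) : Differentiable ℝ T.F :=
  T.contDiff.differentiable two_ne_zero

theorem differentiable_deriv (T : CM lam Astar) : Differentiable ℝ (deriv T.F) :=
  T.contDiff.differentiable_deriv_two

theorem deriv_pos (hlam : 0 < lam) (T : CM lam Astar) (x : ℝ) : 0 < deriv T.F x :=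
  hlam.trans_le (T.expanding x)

theorem Astar_nonneg (T : CM lam Astar) : 0 ≤ Astar :=
  (abs_nonneg _).trans (T.second_bound 0)

theorem lift_add_intCast (T : CM lam Astar) (x : ℝ) (n : ℤ) :
    T.F (x + n) = T.F x + n * T.deg := by
  rw [← zsmul_eq_mul]
  exact AddConstMapClass.map_add_int' (AddConstMap.mk (a := 1) (b := (T.deg : ℝ)) T.F
    T.lift_add_one) x n

theorem deriv_add_intCast (T : CM lam Astar) (x : ℝ) (n : ℤ) :
    deriv T.F (x + n) = deriv T.F x := by
  rw [← deriv_comp_add_const, funext fun y => T.lift_add_intCast y n, deriv_add_const]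

theorem toMap_coe (T : CM lam Astar) (x : ℝ) : T.toMap (x : Circle1) = (T.F x : Circle1) := by
  obtain ⟨n, hn⟩ := Circle1.exists_equivIco_coe_eq x
  rw [toMap, hn, lift_add_intCast, ← Int.cast_mul, Circle1.coe_add_intCast]

theorem dmap_coe (T : CM lam Astar) (x : ℝ) : T.dmap (x : Circle1) = deriv T.F x := by
  obtain ⟨n, hn⟩ := Circle1.exists_equivIco_coe_eq x
  rw [dmap, hn, deriv_add_intCast]

theorem mul_sub_le_lift_sub (T : CM lam Astar) {x y : ℝ} (h : x ≤ y) :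
    lam * (y - x) ≤ T.F y - T.F x :=
  mul_sub_le_image_sub_of_le_deriv T.differentiable T.expanding h

theorem mul_abs_sub_le_abs_lift_sub (T : CM lam Astar) (x y : ℝ) :
    lam * |x - y| ≤ |T.F x - T.F y| := by
  wlog h : y ≤ x generalizing x y
  · simpa only [abs_sub_comm] using this y x (le_of_not_ge h)
  · rw [abs_of_nonneg (sub_nonneg.2 h)]
    exact (T.mul_sub_le_lift_sub h).trans (le_abs_self _)

theorem lift_strictMono (hlam : 0 < lam) (T : CM lam Astar) : StrictMono T.F :=
  strictMono_of_deriv_pos (T.deriv_pos hlam)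

theorem lift_surjective (hlam : 0 < lam) (T : CM lam Astar) : Function.Surjective T.F := by
  refine T.differentiable.continuous.surjective ?_ ?_
  · refine tendsto_atTop_mono' atTop ?_
      (tendsto_atTop_add_const_left _ (T.F 0) (tendsto_id.const_mul_atTop hlam))
    filter_upwards [eventually_ge_atTop 0] with x hx
    simpa [le_sub_iff_add_le'] using T.mul_sub_le_lift_sub hx
  · refine tendsto_atBot_mono' atBot ?_
      (tendsto_atBot_add_const_left _ (T.F 0) (tendsto_id.const_mul_atBot hlam))
    filter_upwards [eventually_le_atBot 0] with x hx
    have := T.mul_sub_le_lift_sub hx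
    simp only [id]
    linarith

theorem deg_pos (hlam : 0 < lam) (T : CM lam Astar) : 0 < T.deg := by
  have h := T.lift_strictMono hlam (lt_add_one 0)
  rw [T.lift_add_one] at h
  exact_mod_cast pos_of_lt_add_right h

theorem cast_toNat_deg (hlam : 0 < lam) (T : CM lam Astar) : (T.deg.toNat : ℝ) = T.deg := by
  exact_mod_cast Int.toNat_of_nonneg (T.deg_pos hlam).le

theorem nonempty_range_toNat_deg (hlam : 0 < lam) (T : CM lam Astar) :
    (Finset.range T.deg.toNat).Nonempty :=
  Finset.nonempty_range_iff.2 (Int.pos_iff_toNat_pos.1 (T.deg_pos hlam)).ne'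

theorem lift_add_toNat_deg (hlam : 0 < lam) (T : CM lam Astar) (x : ℝ) :
    T.F x + T.deg.toNat = T.F (x + 1) := by
  rw [T.lift_add_one, T.cast_toNat_deg hlam]

/-- The lift of an expanding map as an increasing bijection of `ℝ`; its inverse yields all the
inverse branches of the circle map. -/
noncomputable def liftOrderIso (hlam : 0 < lam) (T : CM lam Astar) : ℝ ≃o ℝ :=
  (T.lift_strictMono hlam).orderIsoOfSurjective T.F (T.lift_surjective hlam)

theorem lift_liftOrderIso_symm (hlam : 0 < lam) (T : CM lam Astar) (s : ℝ) :
    T.F ((T.liftOrderIso hlam).symm s) = s :=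
  (T.liftOrderIso hlam).apply_symm_apply s

theorem liftOrderIso_symm_lift (hlam : 0 < lam) (T : CM lam Astar) (x : ℝ) :
    (T.liftOrderIso hlam).symm (T.F x) = x :=
  (T.liftOrderIso hlam).symm_apply_apply x

theorem abs_liftOrderIso_symm_sub_le (hlam : 0 < lam) (T : CM lam Astar) (s t : ℝ) :
    |(T.liftOrderIso hlam).symm s - (T.liftOrderIso hlam).symm t| ≤ |s - t| / lam := by
  rw [le_div_iff₀' hlam]
  simpa only [lift_liftOrderIso_symm] using T.mul_abs_sub_le_abs_lift_sub
    ((T.liftOrderIso hlam).symm s) ((T.liftOrderIso hlam).symm t)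

theorem liftOrderIso_symm_add_natCast_mem_Ioo (hlam : 0 < lam) (T : CM lam Astar) {a s : ℝ}
    (hs : s ∈ Ioo (T.F a) (T.F a + 1)) {j : ℕ} (hj : j < T.deg.toNat) :
    (T.liftOrderIso hlam).symm (s + j) ∈ Ioo a (a + 1) := by
  have hj' : (j : ℝ) + 1 ≤ T.deg := by
    rw [← T.cast_toNat_deg hlam]
    exact_mod_cast hj
  constructor
  · rw [OrderIso.lt_symm_apply]
    change T.F a < s + j
    linarith [hs.1, j.cast_nonneg (α := ℝ)]
  · rw [OrderIso.symm_apply_lt]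
    change s + j < T.F (a + 1)
    linarith [hs.2, T.lift_add_one a]

theorem abs_log_deriv_sub_le (hlam : 0 < lam) (T : CM lam Astar) (x y : ℝ) :
    |Real.log (deriv T.F x) - Real.log (deriv T.F y)| ≤ Astar / lam * |x - y| := by
  refine convex_univ.norm_image_sub_le_of_norm_deriv_le (f := fun x => Real.log (deriv T.F x))
    (fun x _ => (T.differentiable_deriv x).log (T.deriv_pos hlam x).ne') (fun x _ => ?_)
    (mem_univ y) (mem_univ x)
  rw [deriv.log (T.differentiable_deriv x) (T.deriv_pos hlam x).ne', Real.norm_eq_abs, abs_div,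
    abs_of_pos (T.deriv_pos hlam x)]
  exact div_le_div₀ T.Astar_nonneg (T.second_bound x) hlam (T.expanding x)

/-! ### The fibres of an expanding map -/

theorem coe_liftOrderIso_symm_eq_iff (hlam : 0 < lam) (T : CM lam Astar) {t : ℝ} {i j : ℤ} :
    ((T.liftOrderIso hlam).symm (t + i) : Circle1) = ((T.liftOrderIso hlam).symm (t + j) : ℝ) ↔
      i ≡ j [ZMOD T.deg] := by
  have shift_iff : ∀ n : ℤ, (T.liftOrderIso hlam).symm (t + i) =
      (T.liftOrderIso hlam).symm (t + j) + n ↔ i = j + T.deg * n := by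
    intro n
    rw [← (T.lift_strictMono hlam).injective.eq_iff, lift_add_intCast, lift_liftOrderIso_symm,
      lift_liftOrderIso_symm, add_assoc, add_right_inj, mul_comm]
    norm_cast
  simp only [Circle1.coe_eq_coe_iff, shift_iff, Int.modEq_comm (a := i),
    Int.modEq_iff_add_fac]

theorem exists_coe_liftOrderIso_symm_eq (hlam : 0 < lam) (T : CM lam Astar) {y : Circle1} {t : ℝ}
    (hy : T.toMap y = t) : ∃ m : ℤ, ((T.liftOrderIso hlam).symm (t + m) : ℝ) = y := by
  obtain ⟨r, rfl⟩ := QuotientAddGroup.mk_surjective y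
  obtain ⟨m, hm⟩ := Circle1.coe_eq_coe_iff.1 ((T.toMap_coe r).symm.trans hy)
  exact ⟨m, by rw [← hm, liftOrderIso_symm_lift]⟩

/-- The point of the fibre `T⁻¹{t}` lying on the `j`-th inverse branch. -/
noncomputable def fibrePoint (hlam : 0 < lam) (T : CM lam Astar) (t : ℝ)
    (j : Fin T.deg.toNat) : {y : Circle1 // T.toMap y = t} :=
  ⟨((T.liftOrderIso hlam).symm (t + (j : ℕ)) : ℝ), by
    rw [toMap_coe, lift_liftOrderIso_symm]
    exact_mod_cast Circle1.coe_add_intCast t (j : ℕ)⟩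

theorem fibrePoint_bijective (hlam : 0 < lam) (T : CM lam Astar) (t : ℝ) :
    Function.Bijective (T.fibrePoint hlam t) := by
  have hd := T.deg_pos hlam
  constructor
  · intro i j hij
    have hmod : ((i : ℕ) : ℤ) ≡ (j : ℕ) [ZMOD (T.deg.toNat : ℤ)] := by
      rw [Int.toNat_of_nonneg hd.le, ← T.coe_liftOrderIso_symm_eq_iff hlam (t := t)]
      exact_mod_cast congrArg Subtype.val hij
    exact Fin.ext ((Int.natCast_modEq_iff.1 hmod).eq_of_lt_of_lt i.2 j.2)
  · rintro ⟨y, hy⟩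
    obtain ⟨m, rfl⟩ := T.exists_coe_liftOrderIso_symm_eq hlam hy
    have hrem : ((m % T.deg).toNat : ℤ) = m % T.deg :=
      Int.toNat_of_nonneg (Int.emod_nonneg m hd.ne')
    refine ⟨⟨(m % T.deg).toNat, by have := Int.emod_lt_of_pos m hd; omega⟩, Subtype.ext ?_⟩
    have hmod : ((m % T.deg).toNat : ℤ) ≡ m [ZMOD T.deg] := hrem ▸ Int.mod_modEq m T.deg
    exact_mod_cast (T.coe_liftOrderIso_symm_eq_iff hlam (t := t)).2 hmod

/-! ### The transfer operator of the lift -/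

/-- The transfer operator of the lift `F`, a diffeomorphism of `ℝ`, applied to `ψ` regarded as a
`1`-periodic function.  Each value is the contribution of one inverse branch to `transfer T ψ`. -/
noncomputable def liftTransfer (hlam : 0 < lam) (T : CM lam Astar) (ψ : Circle1 → ℝ) (s : ℝ) : ℝ :=
  ψ ((T.liftOrderIso hlam).symm s : ℝ) / deriv T.F ((T.liftOrderIso hlam).symm s)

theorem transfer_coe (hlam : 0 < lam) (T : CM lam Astar) (ψ : Circle1 → ℝ) (t : ℝ) :
    transfer T ψ (t : Circle1) = ∑ j ∈ Finset.range T.deg.toNat, T.liftTransfer hlam ψ (t + j) := by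
  rw [transfer, ← (Equiv.ofBijective _ (T.fibrePoint_bijective hlam t)).tsum_eq, tsum_fintype,
    ← Fin.sum_univ_eq_sum_range (fun j => T.liftTransfer hlam ψ (t + j))]
  refine Finset.sum_congr rfl fun j _ => ?_
  rw [Equiv.ofBijective_apply, fibrePoint, dmap_coe, liftTransfer]

theorem liftTransfer_pos (hlam : 0 < lam) (T : CM lam Astar) {ψ : Circle1 → ℝ}
    (hψ : ∀ x, 0 < ψ x) (s : ℝ) : 0 < T.liftTransfer hlam ψ s :=
  div_pos (hψ _) (T.deriv_pos hlam _)

theorem liftTransfer_lift_mul_deriv (hlam : 0 < lam) (T : CM lam Astar) (ψ : Circle1 → ℝ) :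
    (fun x => (T.liftTransfer hlam ψ ∘ T.F) x * deriv T.F x) = fun x : ℝ => ψ x := by
  funext x
  rw [Function.comp_apply, liftTransfer, liftOrderIso_symm_lift,
    div_mul_cancel₀ _ (T.deriv_pos hlam x).ne']

theorem intervalIntegrable_liftTransfer_iff (hlam : 0 < lam) (T : CM lam Astar)
    {ψ : Circle1 → ℝ} {a b : ℝ} :
    IntervalIntegrable (T.liftTransfer hlam ψ) volume (T.F a) (T.F b) ↔
      IntervalIntegrable (fun x : ℝ => ψ x) volume a b := by
  rw [← T.liftTransfer_lift_mul_deriv hlam]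
  exact (intervalIntegral.integrable_comp_mul_deriv_iff_of_deriv_nonneg
    T.differentiable.continuous.continuousOn (fun x _ => (T.differentiable x).hasDerivAt)
    fun x _ => (T.deriv_pos hlam x).le).symm

theorem integral_liftTransfer (hlam : 0 < lam) (T : CM lam Astar) (ψ : Circle1 → ℝ) (a b : ℝ) :
    ∫ s in T.F a..T.F b, T.liftTransfer hlam ψ s = ∫ x in a..b, ψ x := by
  rw [← T.liftTransfer_lift_mul_deriv hlam]
  exact (intervalIntegral.integral_comp_mul_deriv_of_deriv_nonneg
    T.differentiable.continuous.continuousOn (fun x _ => (T.differentiable x).hasDerivAt)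
    fun x _ => (T.deriv_pos hlam x).le).symm

theorem abs_log_liftTransfer_sub_le (hlam : 0 < lam) (T : CM lam Astar) {ψ : Circle1 → ℝ}
    (hψ : ∀ x, 0 < ψ x) {L : ℝ} (hL : 0 ≤ L) {s t : ℝ}
    (h : |Real.log (ψ ((T.liftOrderIso hlam).symm s : ℝ)) -
        Real.log (ψ ((T.liftOrderIso hlam).symm t : ℝ))| ≤
      L * |(T.liftOrderIso hlam).symm s - (T.liftOrderIso hlam).symm t|) :
    |Real.log (T.liftTransfer hlam ψ s) - Real.log (T.liftTransfer hlam ψ t)| ≤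
      (L / lam + Astar / lam ^ 2) * |s - t| := by
  have hcontract := T.abs_liftOrderIso_symm_sub_le hlam s t
  rw [liftTransfer, liftTransfer, Real.log_div (hψ _).ne' (T.deriv_pos hlam _).ne',
    Real.log_div (hψ _).ne' (T.deriv_pos hlam _).ne', sub_sub_sub_comm]
  set x := (T.liftOrderIso hlam).symm s
  set y := (T.liftOrderIso hlam).symm t
  calc |Real.log (ψ x) - Real.log (ψ y) - (Real.log (deriv T.F x) - Real.log (deriv T.F y))|
      ≤ L * |x - y| + Astar / lam * |x - y| :=
        (abs_sub _ _).trans (add_le_add h (T.abs_log_deriv_sub_le hlam x y))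
    _ = (L + Astar / lam) * |x - y| := by ring
    _ ≤ (L + Astar / lam) * (|s - t| / lam) :=
        mul_le_mul_of_nonneg_left hcontract (add_nonneg hL (div_nonneg T.Astar_nonneg hlam.le))
    _ = (L / lam + Astar / lam ^ 2) * |s - t| := by ring

end CM

/-! ### The transfer operator of the circle map -/

section Transfer

variable {lam Astar : ℝ}

theorem intervalIntegrable_liftTransfer (hlam : 0 < lam) (T : CM lam Astar) {ψ : Circle1 → ℝ}
    (hψ : Integrable ψ) :
    IntervalIntegrable (T.liftTransfer hlam ψ) volume (T.F 0) (T.F 0 + T.deg.toNat) := by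
  rw [T.lift_add_toNat_deg hlam, T.intervalIntegrable_liftTransfer_iff]
  exact (integrable_addCircle_iff_intervalIntegrable 0).1 hψ

theorem integrable_transfer (hlam : 0 < lam) (T : CM lam Astar) {ψ : Circle1 → ℝ}
    (hψ : Integrable ψ) : Integrable (transfer T ψ) := by
  rw [integrable_addCircle_iff_intervalIntegrable (T.F 0)]
  simp only [T.transfer_coe hlam]
  exact intervalIntegrable_sum_comp_add_natCast (intervalIntegrable_liftTransfer hlam T hψ)

theorem integral_transfer (hlam : 0 < lam) (T : CM lam Astar) {ψ : Circle1 → ℝ}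
    (hψ : Integrable ψ) : ∫ x, transfer T ψ x = ∫ x, ψ x := by
  calc ∫ x, transfer T ψ x
      = ∫ t in T.F 0..T.F 0 + 1, ∑ j ∈ Finset.range T.deg.toNat, T.liftTransfer hlam ψ (t + j) := by
        simp only [← AddCircle.intervalIntegral_preimage 1 (T.F 0), T.transfer_coe hlam]
    _ = ∫ s in T.F 0..T.F (0 + 1), T.liftTransfer hlam ψ s := by
        rw [integral_sum_comp_add_natCast (intervalIntegrable_liftTransfer hlam T hψ),
          T.lift_add_toNat_deg hlam]
    _ = ∫ x, ψ x := by
        rw [T.integral_liftTransfer, AddCircle.intervalIntegral_preimage]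

theorem transfer_pos (hlam : 0 < lam) (T : CM lam Astar) {ψ : Circle1 → ℝ} (hψ : ∀ x, 0 < ψ x)
    (x : Circle1) : 0 < transfer T ψ x := by
  obtain ⟨t, rfl⟩ := QuotientAddGroup.mk_surjective x
  rw [T.transfer_coe hlam]
  exact Finset.sum_pos (fun j _ => T.liftTransfer_pos hlam hψ _)
    (T.nonempty_range_toNat_deg hlam)

theorem IsProbDensity.transfer (hlam : 0 < lam) (T : CM lam Astar) {ψ : Circle1 → ℝ}
    (h : IsProbDensity ψ) (hψ : ∀ x, 0 < ψ x) : IsProbDensity (transfer T ψ) :=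
  ⟨integrable_transfer hlam T h.1, (integral_transfer hlam T h.1).trans h.2.1,
    fun x => (transfer_pos hlam T hψ x).le⟩

theorem LipOnArc.log_transfer (hlam : 0 < lam) (T : CM lam Astar) {ψ : Circle1 → ℝ}
    (hψ : ∀ x, 0 < ψ x) {L : ℝ} {z : Circle1} (hz : LipOnArc z L fun x => Real.log (ψ x)) :
    LipOnArc (T.toMap z) (L / lam + Astar / lam ^ 2) fun x => Real.log (_root_.transfer T ψ x) := by
  have hL := hz.nonneg
  obtain ⟨a, rfl⟩ := QuotientAddGroup.mk_surjective z
  rw [T.toMap_coe, lipOnArc_coe_iff]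
  intro s hs t ht
  simp only [T.transfer_coe hlam]
  refine abs_log_sum_sub_log_sum_le (T.nonempty_range_toNat_deg hlam)
    (fun j _ => T.liftTransfer_pos hlam hψ _) (fun j _ => T.liftTransfer_pos hlam hψ _)
    fun j hj => ?_
  rw [← add_sub_add_right_eq_sub s t (j : ℝ)]
  refine T.abs_log_liftTransfer_sub_le hlam hψ hL (lipOnArc_coe_iff.1 hz _ ?_ _ ?_)
  · exact T.liftOrderIso_symm_add_natCast_mem_Ioo hlam hs (Finset.mem_range.1 hj)
  · exact T.liftOrderIso_symm_add_natCast_mem_Ioo hlam ht (Finset.mem_range.1 hj)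

theorem memD.transfer (hlam : 0 < lam) (T : CM lam Astar) {L : ℝ} {ψ : Circle1 → ℝ}
    (h : memD L ψ) : memD (L / lam + Astar / lam ^ 2) (transfer T ψ) := by
  obtain ⟨hdensity, hpos, z, hz⟩ := h
  exact ⟨hdensity.transfer hlam T hpos, transfer_pos hlam T hpos, T.toMap z,
    hz.log_transfer hlam T hpos⟩

/-- The fixed point of the map `L ↦ L / lam + Astar / lam ^ 2` describing the effect of a transfer
operator on Lipschitz constants. -/
noncomputable def fixedLipConst (lam Astar : ℝ) : ℝ := Astar / (lam * (lam - 1))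

theorem div_add_div_sq_eq_fixedLipConst_add (hlam : 1 < lam) (Astar L : ℝ) :
    L / lam + Astar / lam ^ 2 =
      fixedLipConst lam Astar + (L - fixedLipConst lam Astar) / lam := by
  have hlam0 : lam ≠ 0 := by linarith
  have hlam1 : lam - 1 ≠ 0 := by linarith
  rw [fixedLipConst]
  field_simp
  ring

theorem memD.transferIter (hlam : 1 < lam) (Ts : ℕ → CM lam Astar) {L : ℝ} {ψ : Circle1 → ℝ}
    (h : memD L ψ) (k : ℕ) :
    memD (fixedLipConst lam Astar + (L - fixedLipConst lam Astar) / lam ^ k)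
      (transferIter Ts k ψ) := by
  induction k with
  | zero => simpa only [_root_.transferIter, pow_zero, div_one, add_sub_cancel] using h
  | succ k ih =>
    have hstep := ih.transfer (zero_lt_one.trans hlam) (Ts (k + 1))
    rwa [div_add_div_sq_eq_fixedLipConst_add hlam, add_sub_cancel_left, div_div, ← pow_succ]
      at hstep

end Transfer

/-- Lemma `lem:D_stability` (i)–(ii).  There exists `L* > 1` such that
(i) `ℒ_T 𝒟_L ⊆ 𝒟_L` for all `L ≥ L*` and `T ∈ 𝓜`, and (ii) for every `L > L*` there is `N(L)`
such that `ℒ_k ⋯ ℒ_1 𝒟_L ⊆ 𝒟_{L*}` for every `k ≥ N(L)` and every sequence of maps of `𝓜`. -/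
theorem statement1 {lam Astar : ℝ} (hlam : 1 < lam) (hA : 0 < Astar) :
    ∃ Lstar : ℝ, 1 < Lstar ∧
      (∀ L : ℝ, Lstar ≤ L → ∀ (T : CM lam Astar) (ψ : Circle1 → ℝ),
        memD L ψ → memD L (transfer T ψ)) ∧
      (∀ L : ℝ, Lstar < L → ∃ N : ℕ,
        ∀ (Ts : ℕ → CM lam Astar) (ψ : Circle1 → ℝ), memD L ψ →
          ∀ k : ℕ, N ≤ k → memD Lstar (transferIter Ts k ψ)) := by
  have hfixed : 0 < fixedLipConst lam Astar :=
    div_pos hA (mul_pos (by linarith) (by linarith))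
  refine ⟨fixedLipConst lam Astar + 2, by linarith, fun L hL T ψ hψ => ?_, fun L _ => ?_⟩
  · refine (hψ.transfer (by linarith) T).mono ?_
    rw [div_add_div_sq_eq_fixedLipConst_add hlam]
    linarith [div_le_self (show 0 ≤ L - fixedLipConst lam Astar by linarith) hlam.le]
  · have hlim : Tendsto (fun k : ℕ => (L - fixedLipConst lam Astar) / lam ^ k) atTop (𝓝 0) :=
      tendsto_const_nhds.div_atTop (tendsto_pow_atTop_atTop_of_one_lt hlam)
    obtain ⟨N, hN⟩ := eventually_atTop.1 (hlim.eventually_le_const two_pos)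
    exact ⟨N, fun Ts ψ hψ k hk => (hψ.transferIter hlam Ts k).mono (by linarith [hN k hk])⟩
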